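/- Let n ≥ 3, let 2 < s < n, and let μ be a nonzero finite Borel measure on ℝⁿ with compact support such that I_s(μ) < ∞. Then the set of unit vectors e ∈ S^{n−1} for which 0 lies in the interior of π_e(spt μ) ⊆ ℝ has positive (n−1)-dimensional Hausdorff measure in S^{n−1}. -/

import Mathlib

open MeasureTheory Metric Set
open scoped ENNReal RealInnerProductSpace

/-- The topological support of a measure: points all of whose neighbourhoods
have positive measure. -/
def sptm (n : ℕ) (μ : MeasureTheory.Measure (EuclideanSpace ℝ (Fin n))) :
    Set (EuclideanSpace ℝ (Fin n)) :=
  {x | ∀ r > 0, 0 < μ (Metric.ball x r)}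

/-- The `s`-energy `I_s(μ) = ∬ |x-y|^{-s} dμ(x) dμ(y)` of a measure. -/
noncomputable def energyI (n : ℕ) (s : ℝ)
    (μ : MeasureTheory.Measure (EuclideanSpace ℝ (Fin n))) : ℝ≥0∞ :=
  ∫⁻ x, ∫⁻ y, (‖x - y‖₊ : ℝ≥0∞) ^ (-s) ∂μ ∂μ

open ProbabilityTheory Filter Topology

theorem lintegral_rpow_mul_exp_neg_sq_le {s : ℝ} (hs : 0 < s) :
    ∃ C : ℝ≥0∞, C ≠ ∞ ∧ ∀ r : NNReal, ∫⁻ t in Ioi (0 : ℝ),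
      ENNReal.ofReal (t ^ (s - 1) * Real.exp (-((r : ℝ) ^ 2 / 2) * t ^ 2))
        ≤ C * (r : ℝ≥0∞) ^ (-s) := by
  have hΓ : 0 < Real.Gamma (s / 2) := Real.Gamma_pos_of_pos (by positivity)
  set c : ℝ := 2 ^ (s / 2) * (1 / 2) * Real.Gamma (s / 2) with hc
  have hcpos : 0 < c := by positivity
  refine ⟨ENNReal.ofReal c, ENNReal.ofReal_ne_top, fun r ↦ ?_⟩
  rcases eq_or_ne r 0 with rfl | hr
  · simp [ENNReal.zero_rpow_of_neg (neg_lt_zero.2 hs), ENNReal.mul_top, hcpos]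
  have hr0 : (0 : ℝ) < r := by positivity
  have hb : 0 < (r : ℝ) ^ 2 / 2 := by positivity
  rw [← ofReal_integral_eq_lintegral_ofReal]
  · have h := integral_rpow_mul_exp_neg_mul_rpow (p := 2) (q := s - 1) two_pos (by linarith) hb
    simp only [Real.rpow_two] at h
    have hval : 0 ≤ ((r : ℝ) ^ 2 / 2) ^ (-(s - 1 + 1) / 2) * (1 / 2) *
        Real.Gamma ((s - 1 + 1) / 2) := by
      rw [sub_add_cancel]
      positivity
    rw [h, ← ENNReal.coe_rpow_of_ne_zero hr, ENNReal.ofReal, ENNReal.ofReal, ← ENNReal.coe_mul,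
      ENNReal.coe_le_coe, ← NNReal.coe_le_coe, NNReal.coe_mul, Real.coe_toNNReal _ hval,
      Real.coe_toNNReal _ hcpos.le, NNReal.coe_rpow]
    refine le_of_eq ?_
    rw [Real.div_rpow (by positivity) (by positivity), ← Real.rpow_natCast, ← Real.rpow_mul hr0.le]
    rw [hc, show ((2 : ℕ) : ℝ) * (-(s - 1 + 1) / 2) = -s by push_cast; ring,
      show -(s - 1 + 1) / 2 = -(s / 2) by ring, Real.rpow_neg two_pos.le, sub_add_cancel]
    field_simp
  · exact integrableOn_rpow_mul_exp_neg_mul_sq hb (by linarith)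
  · refine (ae_restrict_iff' measurableSet_Ioi).2 (ae_of_all _ fun t ht ↦ ?_)
    have : (0 : ℝ) < t := ht
    simp only [Pi.zero_apply]
    positivity

section
variable {E : Type*} [NormedAddCommGroup E] [InnerProductSpace ℝ E] [FiniteDimensional ℝ E]
  [MeasurableSpace E] [BorelSpace E]

theorem stdGaussian_absolutelyContinuous_volume : stdGaussian E ≪ volume := by
  set C : ℝ := (2 * Real.pi) ^ (Module.finrank ℝ E / 2 : ℝ) with hC
  have hCpos : 0 < C := by positivity
  have hint : Integrable (fun v : E ↦ Real.exp (-‖v‖ ^ 2 / 2)) := by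
    have h := (GaussianFourier.integrable_cexp_neg_mul_sq_norm_add (V := E) (b := 1 / 2)
      (by norm_num) 0 0).norm
    refine h.congr (ae_of_all _ fun v ↦ ?_)
    simp only [Complex.norm_exp]
    congr 1
    rw [← Complex.ofReal_pow]
    simp [-Complex.ofReal_pow]
    ring
  have hmeas : Measurable fun v : E ↦ (Real.exp (-‖v‖ ^ 2 / 2) / C).toNNReal := by fun_prop
  let γ : Measure E := volume.withDensity fun v ↦ ((Real.exp (-‖v‖ ^ 2 / 2) / C).toNNReal : ℝ≥0∞)
  have : IsFiniteMeasure γ := isFiniteMeasure_withDensity_ofReal (hint.div_const C).2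
  have hγ : stdGaussian E = γ := by
    refine Measure.ext_of_charFun (funext fun t ↦ ?_)
    rw [charFun_stdGaussian, charFun_apply, integral_withDensity_eq_integral_smul hmeas]
    have hg := GaussianFourier.integral_cexp_neg_mul_sq_norm_add (V := E) (b := 1 / 2)
      (by norm_num) Complex.I t
    have hCC : ((Real.pi : ℂ) / (1 / 2)) ^ (Module.finrank ℝ E / 2 : ℂ) = C := by
      rw [hC, Complex.ofReal_cpow (by positivity)]
      push_cast
      congr 1
      ring
    rw [hCC] at hg
    have h2 : ∀ v : E, (Real.exp (-‖v‖ ^ 2 / 2) / C).toNNReal • Complex.exp (⟪v, t⟫ * Complex.I)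
        = (C : ℂ)⁻¹ * Complex.exp (-(1 / 2) * ‖v‖ ^ 2 + Complex.I * ⟪t, v⟫) := fun v ↦ by
      rw [NNReal.smul_def, Real.coe_toNNReal _ (by positivity), Complex.real_smul, Complex.exp_add,
        real_inner_comm]
      push_cast
      rw [mul_comm Complex.I]
      ring_nf
    simp_rw [h2]
    rw [integral_const_mul, hg, inv_mul_cancel_left₀ (by exact_mod_cast hCpos.ne')]
    congr 1
    rw [Complex.I_sq]
    ring
  rw [hγ]
  exact withDensity_absolutelyContinuous _ _

/-- The average of a characteristic function over Gaussian directions. -/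
theorem integral_charFun_smul_stdGaussian (ρ : Measure E) [IsFiniteMeasure ρ] (t : ℝ) :
    ∫ θ, charFun ρ (t • θ) ∂stdGaussian E = ∫ z, Real.exp (-(‖z‖ ^ 2 / 2) * t ^ 2) ∂ρ := by
  simp_rw [charFun_apply]
  rw [integral_integral_swap]
  · rw [← integral_complex_ofReal]
    refine integral_congr_ae (ae_of_all _ fun z ↦ ?_)
    have h := charFun_stdGaussian (E := E) (t • z)
    rw [charFun_apply] at h
    simp only [real_inner_smul_right] at h ⊢
    simp_rw [real_inner_comm _ z] at h ⊢
    rw [h, norm_smul, ← Complex.ofReal_pow, mul_pow, Real.norm_eq_abs, sq_abs]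
    push_cast
    congr 1
    ring
  · refine Integrable.of_bound (C := 1) (Continuous.aestronglyMeasurable ?_) (ae_of_all _ ?_)
    · simp only [Function.uncurry_def]; fun_prop
    · rintro ⟨x, y⟩
      simp [Function.uncurry, Complex.norm_exp]

theorem lintegral_enorm_charFun_sq_stdGaussian (μ : Measure E) [IsFiniteMeasure μ] (t : ℝ) :
    ∫⁻ θ, ‖charFun μ (t • θ)‖ₑ ^ 2 ∂stdGaussian E =
      ∫⁻ x, ∫⁻ y, ENNReal.ofReal (Real.exp (-(‖x - y‖ ^ 2 / 2) * t ^ 2)) ∂μ ∂μ := by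
  let ρ : Measure E := (μ.prod μ).map fun p ↦ p.1 - p.2
  have hρ : ∀ ξ, charFun ρ ξ = ((‖charFun μ ξ‖ ^ 2 : ℝ) : ℂ) := fun ξ ↦ by
    push_cast
    rw [← Complex.mul_conj', ← charFun_neg]
    simp_rw [charFun_apply]
    rw [← integral_prod_mul, integral_map (by fun_prop) (by fun_prop)]
    refine integral_congr_ae (ae_of_all _ fun p ↦ ?_)
    simp only [inner_sub_left, inner_neg_right]
    rw [← Complex.exp_add]
    push_cast
    ring_nf
  have h1 := integral_charFun_smul_stdGaussian ρ t
  simp_rw [hρ] at h1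
  rw [integral_complex_ofReal] at h1
  norm_cast at h1
  have hb : ∀ ξ : E, ‖charFun μ ξ‖ ≤ μ.real univ := fun ξ ↦ norm_charFun_le ξ
  have hL : ∫⁻ θ, ‖charFun μ (t • θ)‖ₑ ^ 2 ∂stdGaussian E
      = ENNReal.ofReal (∫ θ, ‖charFun μ (t • θ)‖ ^ 2 ∂stdGaussian E) := by
    rw [ofReal_integral_eq_lintegral_ofReal]
    · simp_rw [ENNReal.ofReal_pow (norm_nonneg _), ofReal_norm]
    · refine Integrable.of_bound (C := μ.real univ ^ 2) ?_ (ae_of_all _ fun θ ↦ ?_)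
      · exact ((measurable_charFun.comp (measurable_const_smul t)).norm.pow_const
          2).aestronglyMeasurable
      · rw [norm_pow, norm_norm]
        exact pow_le_pow_left₀ (norm_nonneg _) (hb _) 2
    · exact ae_of_all _ fun _ ↦ by positivity
  rw [hL, h1, ofReal_integral_eq_lintegral_ofReal, lintegral_map (by fun_prop) (by fun_prop),
    lintegral_prod _ (by fun_prop)]
  · refine Integrable.of_bound (C := 1) (by fun_prop) (ae_of_all _ fun θ ↦ ?_)
    rw [Real.norm_eq_abs, Real.abs_exp, Real.exp_le_one_iff, neg_mul, neg_nonpos]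
    positivity
  · exact ae_of_all _ fun _ ↦ by positivity

/-- Finite `s`-energy with `s > 2` makes the characteristic function integrable along lines, on
average over Gaussian directions. -/
theorem lintegral_enorm_charFun_smul_stdGaussian_lt_top {s : ℝ} (hs : 2 < s) (μ : Measure E)
    [IsFiniteMeasure μ] (hμ : ∫⁻ x, ∫⁻ y, (‖x - y‖₊ : ℝ≥0∞) ^ (-s) ∂μ ∂μ < ∞) :
    ∫⁻ t : ℝ, ∫⁻ θ, ‖charFun μ (t • θ)‖ₑ ∂stdGaussian E < ∞ := by
  set F : ℝ → ℝ≥0∞ := fun t ↦ ∫⁻ θ, ‖charFun μ (t • θ)‖ₑ ∂stdGaussian E with hF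
  have hFneg : ∀ t, F (-t) = F t := fun t ↦ by
    simp only [hF, neg_smul, charFun_neg]
    simp [← ofReal_norm]
  have hFle : ∀ t, F t ≤ μ univ := fun t ↦ by
    refine (lintegral_mono (g := fun _ ↦ μ univ) fun θ ↦ ?_).trans (by simp)
    rw [← ofReal_norm, ENNReal.ofReal_le_iff_le_toReal (measure_ne_top _ _)]
    exact norm_charFun_le _
  obtain ⟨C, hC, hker⟩ := lintegral_rpow_mul_exp_neg_sq_le (s := s) (by linarith)
  have hweighted : ∫⁻ t in Ioi (0 : ℝ), ENNReal.ofReal (t ^ (s - 1)) *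
      ∫⁻ θ, ‖charFun μ (t • θ)‖ₑ ^ 2 ∂stdGaussian E < ∞ := by
    simp_rw [lintegral_enorm_charFun_sq_stdGaussian]
    calc
      _ = ∫⁻ t in Ioi (0 : ℝ), ∫⁻ p : E × E, ENNReal.ofReal (t ^ (s - 1)) *
            ENNReal.ofReal (Real.exp (-(‖p.1 - p.2‖ ^ 2 / 2) * t ^ 2)) ∂(μ.prod μ) := by
          refine lintegral_congr fun t ↦ ?_
          rw [lintegral_const_mul _ (by fun_prop), lintegral_prod _ (by fun_prop)]
      _ = ∫⁻ p : E × E, (∫⁻ t in Ioi (0 : ℝ), ENNReal.ofReal (t ^ (s - 1)) *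
            ENNReal.ofReal (Real.exp (-(‖p.1 - p.2‖ ^ 2 / 2) * t ^ 2))) ∂(μ.prod μ) :=
          lintegral_lintegral_swap (by fun_prop)
      _ ≤ ∫⁻ p : E × E, C * (‖p.1 - p.2‖₊ : ℝ≥0∞) ^ (-s) ∂(μ.prod μ) := by
          refine lintegral_mono fun p ↦ (le_of_eq ?_).trans (hker ‖p.1 - p.2‖₊)
          refine setLIntegral_congr_fun measurableSet_Ioi fun t ht ↦ ?_
          exact (ENNReal.ofReal_mul (Real.rpow_nonneg (le_of_lt ht) _)).symm
      _ = C * ∫⁻ x, ∫⁻ y, (‖x - y‖₊ : ℝ≥0∞) ^ (-s) ∂μ ∂μ := by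
          rw [lintegral_const_mul _ (by fun_prop), lintegral_prod _ (by fun_prop)]
      _ < ∞ := ENNReal.mul_lt_top hC.lt_top hμ
  have htail : ∫⁻ t in Ioi (1 : ℝ), ENNReal.ofReal (t ^ (1 - s)) < ∞ :=
    (integrableOn_Ioi_rpow_of_lt (by linarith) one_pos).lintegral_lt_top
  have hIoi1 : ∫⁻ t in Ioi (1 : ℝ), F t < ∞ := by
    calc
      _ ≤ ∫⁻ t in Ioi (1 : ℝ), (ENNReal.ofReal (t ^ (s - 1)) *
            ∫⁻ θ, ‖charFun μ (t • θ)‖ₑ ^ 2 ∂stdGaussian E + ENNReal.ofReal (t ^ (1 - s))) := by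
          refine setLIntegral_mono' measurableSet_Ioi fun t ht ↦ ?_
          have ht0 : (0 : ℝ) < t := one_pos.trans ht
          have hw : 0 < t ^ (s - 1) := Real.rpow_pos_of_pos ht0 _
          have hinv : t ^ (1 - s) = (t ^ (s - 1))⁻¹ := by
            rw [← Real.rpow_neg ht0.le, neg_sub]
          have hmeas : Measurable fun θ : E ↦ ‖charFun μ (t • θ)‖ₑ ^ 2 :=
            (measurable_charFun.comp (measurable_const_smul t)).enorm.pow_const 2
          rw [← lintegral_const_mul _ hmeas]
          refine (lintegral_mono (g := fun θ ↦ ENNReal.ofReal (t ^ (s - 1)) *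
            ‖charFun μ (t • θ)‖ₑ ^ 2 + ENNReal.ofReal (t ^ (1 - s))) fun θ ↦ ?_).trans_eq ?_
          · simp only [← ofReal_norm]
            rw [← ENNReal.ofReal_pow (norm_nonneg _), ← ENNReal.ofReal_mul hw.le,
              ← ENNReal.ofReal_add (by positivity) (by positivity)]
            refine ENNReal.ofReal_le_ofReal ?_
            set w := t ^ (s - 1)
            set x := ‖charFun μ (t • θ)‖
            have hx : 0 ≤ x := norm_nonneg _
            have hsq : w * x ^ 2 + w⁻¹ - 2 * x = w⁻¹ * (w * x - 1) ^ 2 := by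
              field_simp
              ring
            have : 0 ≤ w⁻¹ * (w * x - 1) ^ 2 := by positivity
            rw [hinv]
            linarith
          · rw [lintegral_add_right _ measurable_const, lintegral_const, measure_univ, mul_one]
      _ = (∫⁻ t in Ioi (1 : ℝ), ENNReal.ofReal (t ^ (s - 1)) *
            ∫⁻ θ, ‖charFun μ (t • θ)‖ₑ ^ 2 ∂stdGaussian E) +
            ∫⁻ t in Ioi (1 : ℝ), ENNReal.ofReal (t ^ (1 - s)) :=
          lintegral_add_right _ (by fun_prop)
      _ < ∞ := ENNReal.add_lt_top.2
          ⟨(lintegral_mono_set (Ioi_subset_Ioi zero_le_one)).trans_lt hweighted, htail⟩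
  have hIoi : ∫⁻ t in Ioi (0 : ℝ), F t < ∞ := by
    rw [← Ioc_union_Ioi_eq_Ioi zero_le_one]
    refine (lintegral_union_le _ _ _).trans_lt (ENNReal.add_lt_top.2 ⟨?_, hIoi1⟩)
    refine (lintegral_mono (g := fun _ ↦ μ univ) hFle).trans_lt ?_
    simp
  have hIic : ∫⁻ t in Iic (0 : ℝ), F t = ∫⁻ t in Ioi (0 : ℝ), F t := by
    have h := (Measure.measurePreserving_neg (volume : Measure ℝ)).setLIntegral_comp_preimage_emb
      (MeasurableEquiv.neg ℝ).measurableEmbedding F (Ioi 0)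
    simp only [hFneg] at h
    rw [← h, ← setLIntegral_congr Iio_ae_eq_Iic]
    congr 2
    ext t
    simp
  rw [← setLIntegral_univ, ← Iic_union_Ioi (a := (0 : ℝ))]
  refine (lintegral_union_le _ _ _).trans_lt (ENNReal.add_lt_top.2 ⟨?_, hIoi⟩)
  rwa [hIic]

theorem stdGaussian_integral_charFun_ne_zero {μ : Measure E} [IsFiniteMeasure μ] (hμ : μ ≠ 0)
    (hfin : ∫⁻ t : ℝ, ∫⁻ θ, ‖charFun μ (t • θ)‖ₑ ∂stdGaussian E < ∞) :
    stdGaussian E {θ | Integrable (fun t : ℝ ↦ charFun μ (t • θ)) ∧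
      ∫ t : ℝ, charFun μ (t • θ) ≠ 0} ≠ 0 := by
  intro hnull
  have hmeas : Measurable fun p : E × ℝ ↦ charFun μ (p.2 • p.1) :=
    measurable_charFun.comp (by fun_prop)
  have hint : Integrable (fun p : E × ℝ ↦ charFun μ (p.2 • p.1))
      ((stdGaussian E).prod volume) := by
    refine ⟨hmeas.aestronglyMeasurable, ?_⟩
    rwa [hasFiniteIntegral_iff_enorm, lintegral_prod_symm _ hmeas.enorm.aemeasurable]
  have hae : ∀ᵐ θ ∂stdGaussian E, ∫ t : ℝ, charFun μ (t • θ) = 0 := by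
    filter_upwards [hint.prod_right_ae, measure_eq_zero_iff_ae_notMem.1 hnull] with θ h1 h2
    by_contra h3
    exact h2 ⟨h1, h3⟩
  have hswap := integral_integral_swap (f := fun (θ : E) (t : ℝ) ↦ charFun μ (t • θ)) hint
  have hint' := hint.integral_prod_right
  simp only [integral_charFun_smul_stdGaussian] at hswap hint'
  rw [integral_congr_ae hae, integral_zero, integral_complex_ofReal] at hswap
  have hzero : ∫ t : ℝ, ∫ z, Real.exp (-(‖z‖ ^ 2 / 2) * t ^ 2) ∂μ = 0 := by
    exact_mod_cast hswap.symm
  have : NeZero μ := ⟨hμ⟩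
  have hpos : ∀ t : ℝ, 0 < ∫ z, Real.exp (-(‖z‖ ^ 2 / 2) * t ^ 2) ∂μ := fun t ↦ by
    refine integral_exp_pos (Integrable.of_bound (C := 1) (by fun_prop) (ae_of_all _ fun z ↦ ?_))
    rw [Real.norm_eq_abs, Real.abs_exp, Real.exp_le_one_iff, neg_mul, neg_nonpos]
    positivity
  refine (integral_pos_iff_support_of_nonneg (fun t ↦ (hpos t).le) ?_).2 ?_ |>.ne' hzero
  · simpa using hint'.re
  · rw [show Function.support _ = univ from eq_univ_of_forall fun t ↦ (hpos t).ne']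
    simp

end

theorem integral_charFun_mul_exp_eq_zero_of_notMem {ν : Measure ℝ} [IsFiniteMeasure ν]
    (hφ : Integrable (charFun ν)) {K : Set ℝ} (hK : IsClosed K) (hνK : ν Kᶜ = 0) {v : ℝ}
    (hv : v ∉ K) : ∫ t : ℝ, charFun ν t * Complex.exp (-(t * v * Complex.I)) = 0 := by
  obtain ⟨δ, hδ, hball⟩ := Metric.isOpen_iff.1 hK.isOpen_compl v hv
  have hνδ : ∀ᵐ u ∂ν, δ ≤ |u - v| := by
    refine measure_mono_null (fun u hu ↦ hball ?_) hνK
    simpa [Real.dist_eq] using hu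
  have hreg : ∀ m : ℝ, 0 < m → ∫ t : ℝ, charFun ν t * Complex.exp (-(t * v * Complex.I)) *
      Complex.exp (-(1 / m : ℝ) * t ^ 2) =
      ∫ u, (Real.sqrt (Real.pi * m) * Real.exp (-(u - v) ^ 2 * m / 4) : ℝ) ∂ν := fun m hm ↦ by
    have hm' : 0 < 1 / m := by positivity
    simp_rw [charFun_apply_real, ← integral_mul_const]
    rw [integral_integral_swap]
    · rw [← integral_complex_ofReal]
      refine integral_congr_ae (ae_of_all _ fun u ↦ ?_)
      have h := fourierIntegral_gaussian (b := (1 / m : ℝ)) (by simpa using hm) (u - v)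
      have hcoef : ((Real.pi : ℂ) / (1 / m : ℝ)) ^ (1 / 2 : ℂ) = (Real.sqrt (Real.pi * m) : ℝ) := by
        rw [Real.sqrt_eq_rpow, Complex.ofReal_cpow (by positivity)]
        push_cast
        congr 1
        field_simp
      rw [hcoef] at h
      push_cast at h ⊢
      convert h using 1
      · refine integral_congr_ae (ae_of_all _ fun t ↦ ?_)
        simp only [← Complex.exp_add]
        congr 1
        ring
      · congr 2
        field_simp
    · have hg : Integrable (fun p : ℝ × ℝ ↦ Real.exp (-(1 / m) * p.1 ^ 2) * (1 : ℝ))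
          (volume.prod ν) :=
        (integrable_exp_neg_mul_sq hm').mul_prod (integrable_const (1 : ℝ))
      refine hg.mono (Continuous.aestronglyMeasurable ?_) (ae_of_all _ ?_)
      · simp only [Function.uncurry_def]; fun_prop
      · rintro ⟨t, u⟩
        simp only [Function.uncurry, norm_mul, Complex.norm_exp]
        rw [← Complex.ofReal_pow]
        simp [-Complex.ofReal_pow, ← Complex.ofReal_mul]
  have hL : Tendsto (fun m : ℝ ↦ ∫ t : ℝ, charFun ν t * Complex.exp (-(t * v * Complex.I)) *
      Complex.exp (-(1 / m : ℝ) * t ^ 2)) atTop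
      (𝓝 (∫ t : ℝ, charFun ν t * Complex.exp (-(t * v * Complex.I)))) := by
    refine tendsto_integral_filter_of_dominated_convergence (fun t ↦ ‖charFun ν t‖) ?_ ?_ hφ.norm ?_
    · refine Eventually.of_forall fun m ↦ ?_
      exact (hφ.aestronglyMeasurable.mul (by fun_prop)).mul (by fun_prop)
    · filter_upwards [eventually_gt_atTop 0] with m hm
      refine ae_of_all _ fun t ↦ ?_
      rw [norm_mul, norm_mul]
      have h1 : ‖Complex.exp (-(t * v * Complex.I))‖ = 1 := by
        simp [Complex.norm_exp]
      have h2 : ‖Complex.exp (-(1 / m : ℝ) * t ^ 2)‖ ≤ 1 := by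
        rw [norm_cexp_neg_mul_sq, Real.exp_le_one_iff, Complex.ofReal_re, neg_mul, neg_nonpos]
        positivity
      rw [h1, mul_one]
      exact mul_le_of_le_one_right (norm_nonneg _) h2
    · refine ae_of_all _ fun t ↦ ?_
      have h0 : Tendsto (fun m : ℝ ↦ 1 / m) atTop (𝓝 0) := by
        simpa using tendsto_inv_atTop_zero (𝕜 := ℝ)
      have h1 : Continuous fun b : ℝ ↦ charFun ν t * Complex.exp (-(t * v * Complex.I)) *
        Complex.exp (-(b : ℂ) * t ^ 2) := by fun_prop
      simpa [Function.comp_def] using (h1.tendsto 0).comp h0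
  refine tendsto_nhds_unique hL (squeeze_zero_norm' (a := fun m : ℝ ↦
    Real.sqrt Real.pi * ν.real univ * (m ^ (1 / 2 : ℝ) * Real.exp (-(δ ^ 2 / 4) * m))) ?_ ?_)
  · filter_upwards [eventually_gt_atTop 0] with m hm
    rw [hreg m hm, Complex.norm_real]
    refine (norm_integral_le_of_norm_le_const (C := Real.sqrt (Real.pi * m) *
      Real.exp (-(δ ^ 2 / 4) * m)) ?_).trans_eq ?_
    · filter_upwards [hνδ] with u hu
      rw [norm_mul, Real.norm_of_nonneg (Real.sqrt_nonneg _), Real.norm_of_nonneg (Real.exp_nonneg _)]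
      gcongr
      have : δ ^ 2 ≤ (u - v) ^ 2 := by rw [← sq_abs (u - v)]; gcongr
      nlinarith
    · rw [Real.sqrt_mul Real.pi_pos.le, ← Real.sqrt_eq_rpow]
      ring
  · simpa using (tendsto_rpow_mul_exp_neg_mul_atTop_nhds_zero (1 / 2) (δ ^ 2 / 4)
      (by positivity)).const_mul (Real.sqrt Real.pi * ν.real univ)

theorem zero_mem_interior_of_integral_charFun_ne_zero {ν : Measure ℝ} [IsFiniteMeasure ν]
    (hφ : Integrable (charFun ν)) {K : Set ℝ} (hK : IsClosed K) (hνK : ν Kᶜ = 0)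
    (h0 : ∫ t : ℝ, charFun ν t ≠ 0) : (0 : ℝ) ∈ interior K := by
  have hcont : Continuous fun v : ℝ ↦
      ∫ t : ℝ, charFun ν t * Complex.exp (-(t * v * Complex.I)) := by
    refine continuous_of_dominated (bound := fun t ↦ ‖charFun ν t‖) (fun v ↦ ?_)
      (fun v ↦ ae_of_all _ fun t ↦ ?_) hφ.norm (ae_of_all _ fun t ↦ by fun_prop)
    · exact hφ.aestronglyMeasurable.mul (by fun_prop)
    · simp [Complex.norm_exp]
  refine mem_interior.2 ⟨{v | ∫ t : ℝ, charFun ν t * Complex.exp (-(t * v * Complex.I)) ≠ 0},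
    fun v hv ↦ ?_, isOpen_ne_fun hcont continuous_const, by simpa using h0⟩
  by_contra hvK
  exact hv (integral_charFun_mul_exp_eq_zero_of_notMem hφ hK hνK hvK)

/-- The points of `ℝᵐ⁺¹` whose coordinates other than the `i`-th form a point of a null set are
themselves a null set. -/
theorem volume_preimage_removeNth_eq_zero {m : ℕ} (i : Fin (m + 1)) {N : Set (Fin m → ℝ)}
    (hN : volume N = 0) : volume {y : Fin (m + 1) → ℝ | i.removeNth y ∈ N} = 0 := by
  have h := (volume_preserving_piFinSuccAbove (fun _ : Fin (m + 1) ↦ ℝ) i).quasiMeasurePreserving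
  refine measure_mono_null (fun y hy ↦ ?_) (h.preimage_null (s := univ ×ˢ N) ?_)
  · exact ⟨mem_univ _, hy⟩
  rw [Measure.volume_eq_prod, Measure.prod_prod, hN, mul_zero]

/-- The cone over an `ℋᵐ`-null subset of the unit sphere of
`ℝᵐ⁺¹` is Lebesgue-null. -/
theorem volume_cone_eq_zero {m : ℕ} {A : Set (EuclideanSpace ℝ (Fin (m + 1)))}
    (hA1 : ∀ a ∈ A, ‖a‖ = 1) (hA : μH[(m : ℝ)] A = 0) :
    volume {θ : EuclideanSpace ℝ (Fin (m + 1)) | θ ≠ 0 ∧ ‖θ‖⁻¹ • θ ∈ A} = 0 := by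
  let p (i : Fin (m + 1)) (x : EuclideanSpace ℝ (Fin (m + 1))) : Fin m → ℝ := i.removeNth x.ofLp
  have hp : ∀ i, LipschitzWith 1 (p i) := fun i ↦ by
    refine LipschitzWith.of_dist_le_mul fun x y ↦ ?_
    rw [NNReal.coe_one, one_mul, dist_pi_le_iff dist_nonneg]
    intro j
    have h := (PiLp.lipschitzWith_ofLp 2 fun _ : Fin (m + 1) ↦ ℝ).dist_le_mul x y
    rw [NNReal.coe_one, one_mul] at h
    exact (dist_le_pi_dist x.ofLp y.ofLp (i.succAbove j)).trans h
  have hN : ∀ i, volume (p i '' A) = 0 := fun i ↦ by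
    have h := (hp i).hausdorffMeasure_image_le (Nat.cast_nonneg m) A
    rw [hA, mul_zero, nonpos_iff_eq_zero] at h
    have h2 := hausdorffMeasure_pi_real (ι := Fin m)
    rw [Fintype.card_fin] at h2
    rwa [h2] at h
  let Φ (i : Fin (m + 1)) (c : ℝ) (y : Fin (m + 1) → ℝ) : Fin (m + 1) → ℝ := fun j ↦
    y i * if j = i then c * Real.sqrt (1 - ∑ k, i.removeNth y k ^ 2) else y j
  let S (i : Fin (m + 1)) : Set (Fin (m + 1) → ℝ) :=
    {y | i.removeNth y ∈ p i '' A} ∩ {y | ∑ k, i.removeNth y k ^ 2 < 1}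
  have hΦ : ∀ i c, volume (Φ i c '' S i) = 0 := fun i c ↦ by
    refine addHaar_image_eq_zero_of_differentiableOn_of_addHaar_eq_zero volume ?_
      (measure_mono_null inter_subset_left (volume_preimage_removeNth_eq_zero i (hN i)))
    rw [differentiableOn_pi]
    intro j y hy
    have hy2 : 1 - ∑ k, i.removeNth y k ^ 2 ≠ 0 := (sub_pos.2 hy.2).ne'
    refine DifferentiableAt.differentiableWithinAt ?_
    simp only [Φ]
    split_ifs
    · simp only [Fin.removeNth] at hy2 ⊢
      have hsqrt : DifferentiableAt ℝ
          (fun x : Fin (m + 1) → ℝ ↦ Real.sqrt (1 - ∑ k, x (i.succAbove k) ^ 2)) y :=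
        DifferentiableAt.sqrt (by fun_prop) hy2
      exact (differentiableAt_apply i y).mul (hsqrt.const_mul c)
    · fun_prop
  have hU : volume (⋃ i, Φ i 1 '' S i ∪ Φ i (-1) '' S i) = 0 := by
    simp [hΦ]
  refine measure_mono_null ?_
    ((PiLp.volume_preserving_ofLp (Fin (m + 1))).quasiMeasurePreserving.preimage_null hU)
  rintro θ ⟨hθ0, hθA⟩
  obtain ⟨i, hi⟩ : ∃ i, θ i ≠ 0 := by
    by_contra! h
    exact hθ0 (by ext i; exact h i)
  have hnorm : 0 < ‖θ‖ := norm_pos_iff.2 hθ0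
  set a := ‖θ‖⁻¹ • θ with ha
  have hai : a i ≠ 0 := by
    simp only [ha, PiLp.smul_apply, smul_eq_mul]
    exact mul_ne_zero (by positivity) hi
  have hsum : a i ^ 2 + ∑ k, a (i.succAbove k) ^ 2 = 1 := by
    have h := EuclideanSpace.norm_sq_eq a
    rw [hA1 a hθA, Fin.sum_univ_succAbove _ i] at h
    simpa using h.symm
  have hθa : ∀ j, θ j = ‖θ‖ * a j := fun j ↦ by
    simp only [ha, PiLp.smul_apply, smul_eq_mul]
    field_simp
  let y : Fin (m + 1) → ℝ := fun j ↦ if j = i then ‖θ‖ else a j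
  have hyr : i.removeNth y = p i a := by
    ext k
    simp [y, p, Fin.removeNth]
  have hyk : ∑ k, i.removeNth y k ^ 2 = 1 - a i ^ 2 := by
    rw [hyr]
    simp only [p, Fin.removeNth]
    linarith
  have hyS : y ∈ S i := by
    refine ⟨?_, ?_⟩
    · simp only [mem_ofPred_eq, hyr]
      exact mem_image_of_mem _ hθA
    · simp only [mem_ofPred_eq, hyk]
      have : 0 < a i ^ 2 := by positivity
      linarith
  have hΦy : ∀ c, c * |a i| = a i → Φ i c y = θ.ofLp := fun c hc ↦ by
    ext j
    simp only [Φ, hyk]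
    rw [hθa j, sub_sub_cancel, Real.sqrt_sq_eq_abs, hc]
    by_cases hj : j = i
    · subst hj; simp [y]
    · simp [y, hj]
  refine mem_iUnion.2 ⟨i, ?_⟩
  rcases abs_choice (a i) with h | h
  · exact Or.inl ⟨y, hyS, hΦy 1 (by rw [h, one_mul])⟩
  · exact Or.inr ⟨y, hyS, hΦy (-1) (by rw [h]; ring)⟩

/-- The set of directions along which the projection of a measure contains a neighbourhood of `0`
is not Gaussian-null. -/
theorem stdGaussian_zero_mem_interior_ne_zero {E : Type*} [NormedAddCommGroup E]
    [InnerProductSpace ℝ E] [FiniteDimensional ℝ E] [MeasurableSpace E] [BorelSpace E]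
    {s : ℝ} (hs : 2 < s) {μ : Measure E} [IsFiniteMeasure μ] (hμ : μ ≠ 0)
    (hμe : ∫⁻ x, ∫⁻ y, (‖x - y‖₊ : ℝ≥0∞) ^ (-s) ∂μ ∂μ < ∞)
    {K : Set E} (hK : IsCompact K) (hμK : μ Kᶜ = 0) :
    stdGaussian E {θ | (0 : ℝ) ∈ interior ((fun x ↦ ⟪x, θ⟫) '' K)} ≠ 0 := by
  refine fun h ↦ stdGaussian_integral_charFun_ne_zero hμ
    (lintegral_enorm_charFun_smul_stdGaussian_lt_top hs μ hμe) (measure_mono_null ?_ h)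
  rintro θ ⟨hint, hne⟩
  have hcont : Continuous fun x : E ↦ ⟪x, θ⟫ := by fun_prop
  have hchar : charFun (μ.map fun x ↦ ⟪x, θ⟫) = fun t : ℝ ↦ charFun μ (t • θ) := by
    ext t
    rw [charFun_apply_real, charFun_apply, integral_map hcont.aemeasurable (by fun_prop)]
    simp [real_inner_smul_right]
  have hclosed := (hK.image hcont).isClosed
  refine zero_mem_interior_of_integral_charFun_ne_zero (ν := μ.map fun x ↦ ⟪x, θ⟫)
    (by rwa [hchar]) hclosed ?_ (by rwa [hchar])
  rw [Measure.map_apply hcont.measurable hclosed.measurableSet.compl]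
  exact measure_mono_null (fun x hx hxK ↦ hx (mem_image_of_mem _ hxK)) hμK

open scoped Pointwise in
theorem zero_mem_interior_image_inner_smul {E : Type*} [NormedAddCommGroup E]
    [InnerProductSpace ℝ E] {K : Set E} {θ : E} {c : ℝ} (hc : c ≠ 0)
    (h : (0 : ℝ) ∈ interior ((fun x ↦ ⟪x, θ⟫) '' K)) :
    (0 : ℝ) ∈ interior ((fun x ↦ ⟪x, c • θ⟫) '' K) := by
  have himage : (fun x ↦ ⟪x, c • θ⟫) '' K = c • ((fun x ↦ ⟪x, θ⟫) '' K) := by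
    rw [← image_smul, image_image]
    simp [real_inner_smul_right]
  rw [himage, interior_smul₀ hc]
  exact ⟨0, h, by simp⟩

theorem measure_compl_sptm (n : ℕ) (μ : Measure (EuclideanSpace ℝ (Fin n))) :
    μ (sptm n μ)ᶜ = 0 := by
  have h : sptm n μ = μ.support := by
    ext x
    exact (nhds_basis_ball.mem_measureSupport).symm
  rw [h]
  exact Measure.measure_compl_support

theorem stmt_10 (n : ℕ) (hn : 3 ≤ n) (s : ℝ) (hs2 : 2 < s) (hsn : s < n)
    (μ : Measure (EuclideanSpace ℝ (Fin n)))
    [IsFiniteMeasure μ] (hμ0 : μ ≠ 0)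
    (hμc : IsCompact (sptm n μ)) (hμe : energyI n s μ < ∞) :
    0 < μH[(n : ℝ) - 1]
      {e : EuclideanSpace ℝ (Fin n) | ‖e‖ = 1 ∧
        (0 : ℝ) ∈ interior ((fun x => ⟪x, e⟫) '' sptm n μ)} := by
  obtain ⟨m, rfl⟩ : ∃ m, n = m + 1 := ⟨n - 1, by omega⟩
  by_contra! hnull
  have hcast : (((m + 1 : ℕ) : ℝ) - 1) = m := by
    push_cast
    ring
  rw [hcast, nonpos_iff_eq_zero] at hnull
  have hcone := volume_cone_eq_zero (fun a ha ↦ ha.1) hnull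
  refine stdGaussian_zero_mem_interior_ne_zero hs2 hμ0 hμe hμc (measure_compl_sptm _ μ)
    (stdGaussian_absolutelyContinuous_volume
      (measure_mono_null ?_ (measure_union_null hcone (measure_singleton 0))))
  intro θ hθ
  by_cases h0 : θ = 0
  · exact Or.inr h0
  · refine Or.inl ⟨h0, norm_smul_inv_norm h0, ?_⟩
    exact zero_mem_interior_image_inner_smul (inv_ne_zero (norm_ne_zero_iff.2 h0)) hθ
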